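/- If h(x) = ℓ_1(x)⋯ℓ_d(x) is a product of linear forms with h(e) ≠ 0, then for every 1 ≤ k ≤ d−1 the hyperbolicity cone Λ₊(D_e^k h, e) of the k-th directional derivative is spectrahedral. -/

import Mathlib

open MvPolynomial

/-- The directional derivative `D_e h = Σ_i e_i ∂h/∂x_i`. -/
noncomputable def dirDeriv {n : ℕ} (e : Fin n → ℝ) (h : MvPolynomial (Fin n) ℝ) :
    MvPolynomial (Fin n) ℝ :=
  ∑ i, C (e i) * pderiv i h

/-- The hyperbolicity cone: the closure of the connected component of `{x : h(x) ≠ 0}`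
containing `e`. -/
noncomputable def hypCone {n : ℕ} (h : MvPolynomial (Fin n) ℝ) (e : Fin n → ℝ) :
    Set (Fin n → ℝ) :=
  closure (connectedComponentIn {x | eval x h ≠ 0} e)

/-!
Normalise the forms so that `ℓ_j(e) = 1`. Then `D_e` sends every factor to `1`, so `D_e^k h` is a
constant times the elementary symmetric polynomial `e_{m+1}` of the forms, where `m + 1 = d - k`,
and its hyperbolicity cone is the preimage of the closure of the cone `Γ` where
`e_0, …, e_{m+1} > 0`.

The ratio `q_m = e_{m+1} / e_m` satisfies
`(m + 2) q_{m+1}(y) = ∑ i, y_i r_i / (y_i + r_i)`, where `r_i` is `q_m` with the variable `i`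
deleted. A parallel sum `y r / (y + r)` is the minimum of `y (1 - w)² + r w²` over `w`, so by
induction `q_m` is on `Γ` the minimum, over an affine hyperplane, of quadratic forms `Q_y` depending
linearly on `y`; Newton's inequalities keep `Γ` stable under deleting a variable.

Hence `Q_y ≥ 0` on `Γ`. Conversely, if `Q_y ≥ 0` then `q_m(y + s) ≥ s q_m(1)` as long as `y + s`
is in `Γ`, while `q_m` tends to `0` at the largest root of `s ↦ e_{m+1}(y + s)`: so that root is
nonpositive, and `y` lies in the closure of `Γ`. Therefore that closure is `{y | Q_y ≥ 0}`.
-/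

open Finset
open scoped Nat

section ElemSymm

variable {ι A : Type*}

/-- The elementary symmetric polynomial `e_m` in the variables indexed by `S`, evaluated at `y`.
This is `Multiset.esymm` of the values of `y`; the index set is kept as a parameter because the
arguments below delete variables one at a time. -/
def elemSymm [CommSemiring A] (S : Finset ι) (y : ι → A) (m : ℕ) : A :=
  ∑ T ∈ S.powersetCard m, ∏ i ∈ T, y i

section CommSemiring

variable [CommSemiring A]

@[simp]
lemma elemSymm_zero (S : Finset ι) (y : ι → A) : elemSymm S y 0 = 1 := by
  simp [elemSymm]

lemma elemSymm_one (S : Finset ι) (y : ι → A) : elemSymm S y 1 = ∑ i ∈ S, y i := by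
  simp [elemSymm, powersetCard_one]

lemma elemSymm_card (S : Finset ι) (y : ι → A) : elemSymm S y #S = ∏ i ∈ S, y i := by
  simp [elemSymm]

lemma elemSymm_eq_zero_of_card_lt {S : Finset ι} {m : ℕ} (h : #S < m) (y : ι → A) :
    elemSymm S y m = 0 := by
  simp [elemSymm, powersetCard_eq_empty.2 h]

@[simp]
lemma elemSymm_empty_succ (y : ι → A) (m : ℕ) : elemSymm ∅ y (m + 1) = 0 :=
  elemSymm_eq_zero_of_card_lt (by simp) y

lemma map_elemSymm {B F : Type*} [CommSemiring B] [FunLike F A B] [RingHomClass F A B] (f : F)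
    (S : Finset ι) (y : ι → A) (m : ℕ) :
    f (elemSymm S y m) = elemSymm S (fun i => f (y i)) m := by
  simp [elemSymm, map_sum, map_prod]

lemma elemSymm_smul (S : Finset ι) (c : A) (y : ι → A) (m : ℕ) :
    elemSymm S (c • y) m = c ^ m * elemSymm S y m := by
  rw [elemSymm, elemSymm, mul_sum]
  refine sum_congr rfl fun T hT => ?_
  simp [prod_mul_distrib, (mem_powersetCard.1 hT).2]

variable [DecidableEq ι]

lemma elemSymm_insert {S : Finset ι} {a : ι} (ha : a ∉ S) (y : ι → A) (m : ℕ) :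
    elemSymm (insert a S) y (m + 1) = elemSymm S y (m + 1) + y a * elemSymm S y m := by
  have notMem_of_mem {T : Finset ι} {k : ℕ} (hT : T ∈ S.powersetCard k) : a ∉ T :=
    fun h => ha ((mem_powersetCard.1 hT).1 h)
  have hdisj : Disjoint (S.powersetCard (m + 1)) ((S.powersetCard m).image (insert a)) :=
    disjoint_left.2 fun T hT hT' => by
      obtain ⟨U, -, rfl⟩ := mem_image.1 hT'
      exact notMem_of_mem hT (mem_insert_self a U)
  have hinj : Set.InjOn (insert a) (S.powersetCard m : Set (Finset ι)) := fun T hT U hU h => by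
    rw [← erase_insert (notMem_of_mem hT), h, erase_insert (notMem_of_mem hU)]
  rw [elemSymm, powersetCard_succ_insert ha, sum_union hdisj, sum_image hinj, elemSymm, elemSymm,
    mul_sum]
  congr 1
  exact sum_congr rfl fun T hT => prod_insert (notMem_of_mem hT)

lemma elemSymm_erase {S : Finset ι} {a : ι} (ha : a ∈ S) (y : ι → A) (m : ℕ) :
    elemSymm S y (m + 1) = elemSymm (S.erase a) y (m + 1) + y a * elemSymm (S.erase a) y m := by
  conv_lhs => rw [← insert_erase ha]
  exact elemSymm_insert (notMem_erase a S) y m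

lemma sum_mul_elemSymm_erase (S : Finset ι) (y : ι → A) (m : ℕ) :
    ∑ i ∈ S, y i * elemSymm (S.erase i) y m = (m + 1) * elemSymm S y (m + 1) := by
  induction S using Finset.induction_on generalizing m with
  | empty => simp
  | insert a S ha ih =>
    rw [sum_insert ha, erase_insert ha]
    have erase_insert_comm (i : ι) (hi : i ∈ S) : (insert a S).erase i = insert a (S.erase i) :=
      erase_insert_of_ne fun h => ha (h ▸ hi)
    cases m with
    | zero =>
      have := ih 0
      simp only [elemSymm_zero, elemSymm_insert ha, Nat.cast_zero] at this ⊢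
      rw [this]
      ring
    | succ m =>
      have hterm (i : ι) (hi : i ∈ S) : y i * elemSymm ((insert a S).erase i) y (m + 1) =
          y i * elemSymm (S.erase i) y (m + 1) + y a * (y i * elemSymm (S.erase i) y m) := by
        rw [erase_insert_comm i hi, elemSymm_insert fun h => ha (mem_of_mem_erase h)]
        ring
      rw [sum_congr rfl hterm, sum_add_distrib, ← mul_sum, ih, ih, elemSymm_insert ha]
      push_cast
      ring

end CommSemiring

lemma elemSymm_pos [CommSemiring A] [PartialOrder A] [IsStrictOrderedRing A] {S : Finset ι}
    {y : ι → A} (hy : ∀ i ∈ S, 0 < y i) {m : ℕ} (hm : m ≤ #S) : 0 < elemSymm S y m :=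
  sum_pos (fun _ hT => prod_pos fun i hi => hy i ((mem_powersetCard.1 hT).1 hi))
    (powersetCard_nonempty.2 hm)

lemma continuous_elemSymm [CommSemiring A] [TopologicalSpace A] [IsTopologicalSemiring A]
    (S : Finset ι) (m : ℕ) : Continuous fun y : ι → A => elemSymm S y m := by
  unfold elemSymm
  fun_prop

section Derivation

variable {R : Type*} [CommSemiring R] [CommRing A] [Algebra R A] {S : Finset ι} {y : ι → A}

theorem derivation_elemSymm_succ (D : Derivation R A A) (hD : ∀ i ∈ S, D (y i) = 1) (m : ℕ) :
    D (elemSymm S y (m + 1)) = (#S - m) * elemSymm S y m := by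
  classical
  induction S using Finset.induction_on generalizing m with
  | empty => cases m <;> simp
  | insert a S ha ih =>
    have ih := ih fun i hi => hD i (mem_insert_of_mem hi)
    have hDa := hD a (mem_insert_self a S)
    rw [elemSymm_insert ha, map_add, D.leibniz, ih, hDa, card_insert_of_notMem ha]
    cases m with
    | zero => simp
    | succ m =>
      rw [ih, elemSymm_insert ha]
      simp only [smul_eq_mul]
      push_cast
      ring

theorem iterate_derivation_prod (D : Derivation R A A) (hD : ∀ i ∈ S, D (y i) = 1) {k m : ℕ}
    (hkm : k + m = #S) : D^[k] (∏ i ∈ S, y i) = k ! * elemSymm S y m := by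
  induction k generalizing m with
  | zero => simp [← elemSymm_card, ← hkm]
  | succ k ih =>
    have hcard : (#S : A) = k + 1 + m := by
      rw [← hkm]
      push_cast
      ring
    rw [Function.iterate_succ_apply', ih (m := m + 1) (by omega), D.leibniz, D.map_natCast,
      derivation_elemSymm_succ D hD, hcard, Nat.factorial_succ]
    simp only [smul_eq_mul]
    push_cast
    ring

end Derivation

end ElemSymm

section RealRooted

open Polynomial (derivative roots)

variable {p : Polynomial ℝ}

/-- Rolle's theorem loses at most one root, as does differentiation one degree. -/
lemma splits_derivative (hp : p.Splits) : (derivative p).Splits := by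
  rcases Nat.eq_zero_or_pos p.natDegree with hdeg | hdeg
  · rw [Polynomial.derivative_of_natDegree_zero hdeg]
    exact Polynomial.Splits.zero
  · rw [Polynomial.splits_iff_card_roots] at hp ⊢
    have := Polynomial.card_roots_le_derivative p
    have := Polynomial.card_roots' (derivative p)
    have := Polynomial.natDegree_derivative_lt hdeg.ne'
    omega

lemma splits_iterate_derivative (hp : p.Splits) (k : ℕ) : (derivative^[k] p).Splits :=
  Function.Iterate.rec _ hp (fun _ => splits_derivative) k

theorem laguerre_inequality (hp : p.Splits) (x : ℝ) :
    p.eval x * (derivative (derivative p)).eval x ≤ (derivative p).eval x ^ 2 := by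
  rw [hp.eq_prod_roots]
  induction p.roots using Multiset.induction_on with
  | empty => simp
  | cons a s ih =>
    rw [Multiset.map_cons, Multiset.prod_cons, mul_left_comm]
    set g := Polynomial.C p.leadingCoeff * (s.map fun r => Polynomial.X - Polynomial.C r).prod
    simp only [Polynomial.derivative_mul, Polynomial.derivative_add, Polynomial.derivative_sub,
      Polynomial.derivative_X, Polynomial.derivative_C, Polynomial.eval_add,
      Polynomial.eval_mul, Polynomial.eval_sub, Polynomial.eval_X, Polynomial.eval_C, sub_zero,
      one_mul]
    nlinarith [sq_nonneg (g.eval x), mul_nonneg (sq_nonneg (x - a)) (sub_nonneg.2 ih)]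

/-- The logarithmic derivative `∑ 1 / (x - r)` is at least any one of its terms. -/
lemma eval_le_sub_mul_eval_derivative (hp : p.Splits) {r x : ℝ} (hr : r ∈ p.roots)
    (hroots : ∀ r' ∈ p.roots, r' < x) (hx : 0 < p.eval x) :
    p.eval x ≤ (x - r) * (derivative p).eval x := by
  have hterm : 1 / (x - r) ≤ (p.roots.map fun r' => 1 / (x - r')).sum := by
    refine Multiset.single_le_sum (fun z hz => ?_) _ (Multiset.mem_map_of_mem _ hr)
    obtain ⟨r', hr', rfl⟩ := Multiset.mem_map.1 hz
    exact one_div_nonneg.2 (sub_nonneg.2 (hroots r' hr').le)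
  rw [← hp.eval_derivative_div_eval_of_ne_zero hx.ne',
    div_le_div_iff₀ (sub_pos.2 (hroots r hr)) hx] at hterm
  linarith

lemma eval_derivative_pos (hp : p.Splits) (hp' : derivative p ≠ 0) {x : ℝ}
    (hroots : ∀ r ∈ p.roots, r < x) (hx : 0 < p.eval x) : 0 < (derivative p).eval x := by
  have hdeg : p.degree ≠ 0 := fun h =>
    hp' (Polynomial.derivative_of_natDegree_zero (Polynomial.natDegree_eq_of_degree_eq_some h))
  obtain ⟨r, hr⟩ := hp.exists_eval_eq_zero hdeg
  have hmem : r ∈ p.roots := (Polynomial.mem_roots (by rintro rfl; simp at hp')).2 hr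
  have := eval_le_sub_mul_eval_derivative hp hmem hroots hx
  exact pos_of_mul_pos_right (hx.trans_le this) (sub_pos.2 (hroots r hmem)).le

end RealRooted

section GardingCone

variable {ι : Type*} {S : Finset ι} {y : ι → ℝ} {m : ℕ}

/-- The univariate polynomial `t ↦ e_m(y + t • 1)`, the restriction of `e_m` to a line in the
direction of hyperbolicity. -/
noncomputable def elemSymmLine (S : Finset ι) (y : ι → ℝ) (m : ℕ) : Polynomial ℝ :=
  elemSymm S (fun i => Polynomial.X + Polynomial.C (y i)) m

lemma eval_elemSymmLine (S : Finset ι) (y : ι → ℝ) (m : ℕ) (t : ℝ) :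
    (elemSymmLine S y m).eval t = elemSymm S (y + t • 1) m := by
  rw [elemSymmLine, ← Polynomial.coe_evalRingHom, map_elemSymm]
  congr 1
  ext i
  simp [add_comm]

lemma derivative_elemSymmLine_succ (S : Finset ι) (y : ι → ℝ) (m : ℕ) :
    Polynomial.derivative (elemSymmLine S y (m + 1)) =
      Polynomial.C (#S - m : ℝ) * elemSymmLine S y m := by
  have := derivation_elemSymm_succ (S := S) (y := fun i => Polynomial.X + Polynomial.C (y i))
    (Polynomial.derivative' (R := ℝ)) (by simp) m
  simpa [elemSymmLine] using this

lemma splits_elemSymmLine (hm : m ≤ #S) (y : ι → ℝ) : (elemSymmLine S y m).Splits := by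
  obtain ⟨k, hk⟩ := Nat.exists_eq_add_of_le' hm
  have hiter : Polynomial.derivative^[k] (∏ i ∈ S, (Polynomial.X + Polynomial.C (y i))) =
      (k ! : Polynomial ℝ) * elemSymmLine S y m :=
    iterate_derivation_prod (Polynomial.derivative' (R := ℝ)) (by simp) hk.symm
  have hsplits := splits_iterate_derivative
    (Polynomial.Splits.prod (s := S) fun i _ => Polynomial.Splits.X_add_C (y i)) k
  have hk0 : (k ! : ℝ) ≠ 0 := by positivity
  rw [hiter] at hsplits
  have := hsplits.C_mul (k ! : ℝ)⁻¹
  rwa [← mul_assoc, ← Polynomial.C_eq_natCast, ← Polynomial.C_mul, inv_mul_cancel₀ hk0,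
    Polynomial.C_1, one_mul] at this

/-- Laguerre's inequality for `t ↦ e_{m+2}(y + t • 1)` at `t = 0`. -/
theorem elemSymm_mul_elemSymm_le_sq (S : Finset ι) (y : ι → ℝ) (m : ℕ) :
    elemSymm S y m * elemSymm S y (m + 2) ≤ elemSymm S y (m + 1) ^ 2 := by
  by_cases hm : m + 2 ≤ #S
  · have hlag := laguerre_inequality (splits_elemSymmLine hm y) 0
    simp only [derivative_elemSymmLine_succ, Polynomial.derivative_C_mul, Polynomial.eval_C_mul,
      eval_elemSymmLine, zero_smul, add_zero] at hlag
    push_cast at hlag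
    have hcard : (m : ℝ) + 2 ≤ #S := by exact_mod_cast hm
    have hreduced : (#S - m : ℝ) * (elemSymm S y m * elemSymm S y (m + 2)) ≤
        (#S - (m + 1)) * elemSymm S y (m + 1) ^ 2 :=
      le_of_mul_le_mul_left (by linarith) (show (0 : ℝ) < #S - (m + 1) by linarith)
    refine le_of_mul_le_mul_left (hreduced.trans ?_) (show (0 : ℝ) < #S - m by linarith)
    gcongr
    linarith
  · rw [elemSymm_eq_zero_of_card_lt (by omega : #S < m + 2), mul_zero]
    positivity

lemma elemSymm_le_elemSymm_add (hm : m ≤ #S) (hy : ∀ j ≤ m, 0 ≤ elemSymm S y j) {t : ℝ}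
    (ht : 0 ≤ t) : elemSymm S y m ≤ elemSymm S (y + t • 1) m := by
  induction m generalizing t with
  | zero => simp
  | succ m ih =>
    have ih := @ih (by omega) fun j hj => hy j (by omega)
    have hmono : MonotoneOn (fun s => (elemSymmLine S y (m + 1)).eval s) (Set.Ici 0) := by
      refine monotoneOn_of_deriv_nonneg (convex_Ici 0) (Polynomial.continuous _).continuousOn
        (Polynomial.differentiable _).differentiableOn fun s hs => ?_
      rw [interior_Ici, Set.mem_Ioi] at hs
      rw [Polynomial.deriv, derivative_elemSymmLine_succ, Polynomial.eval_C_mul,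
        eval_elemSymmLine]
      have hcard : (m : ℝ) + 1 ≤ #S := by exact_mod_cast hm
      exact mul_nonneg (by linarith) ((hy m m.le_succ).trans (ih hs.le))
    simpa [eval_elemSymmLine] using hmono Set.self_mem_Ici ht ht

lemma eventually_elemSymm_add_pos (hm : m ≤ #S) (y : ι → ℝ) :
    ∀ᶠ t : ℝ in Filter.atTop, 0 < elemSymm S (y + t • 1) m := by
  have hcoord : ∀ᶠ t : ℝ in Filter.atTop, ∀ i ∈ S, 0 < y i + t :=
    S.eventually_all.2 fun i _ =>
      (Filter.tendsto_atTop_add_const_left _ (y i) Filter.tendsto_id).eventually_gt_atTop 0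
  filter_upwards [hcoord] with t ht
  exact elemSymm_pos (by simpa using ht) hm

lemma elemSymmLine_ne_zero (hm : m ≤ #S) (y : ι → ℝ) :
    elemSymmLine S y m ≠ 0 := fun h => by
  obtain ⟨t, ht⟩ := (eventually_elemSymm_add_pos hm y).exists
  simp [← eval_elemSymmLine, h] at ht

lemma elemSymm_add_pos_of_forall_ne_zero (hm : m ≤ #S)
    (hy : ∀ t : ℝ, 0 ≤ t → elemSymm S (y + t • 1) m ≠ 0) {t : ℝ} (ht : 0 ≤ t) :
    0 < elemSymm S (y + t • 1) m := by
  obtain ⟨T, hT, htT⟩ :=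
    ((eventually_elemSymm_add_pos hm y).and (Filter.eventually_ge_atTop t)).exists
  have hcont : Continuous fun s : ℝ => elemSymm S (y + s • 1) m :=
    (continuous_elemSymm S m).comp (by fun_prop)
  by_contra! hneg
  obtain ⟨s, hs, hzero⟩ := intermediate_value_Icc htT hcont.continuousOn ⟨hneg, hT.le⟩
  exact hy s (ht.trans hs.1) hzero

/-- The open hyperbolicity cone of `e_m` with respect to the all-ones vector, described by the
positivity of the derivatives `e_j`, `j ≤ m`, of `e_m` in that direction. -/
def gardingCone (S : Finset ι) (m : ℕ) : Set (ι → ℝ) :=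
  {y | ∀ j ≤ m, 0 < elemSymm S y j}

lemma mem_gardingCone_of_forall_ne_zero (hm : m ≤ #S)
    (hy : ∀ t : ℝ, 0 ≤ t → elemSymm S (y + t • 1) m ≠ 0) : y ∈ gardingCone S m := by
  induction m with
  | zero => simp [gardingCone]
  | succ m ih =>
    have hpos {t : ℝ} (ht : 0 ≤ t) := elemSymm_add_pos_of_forall_ne_zero hm hy ht
    have hcard : (0 : ℝ) < #S - m := sub_pos.2 (by exact_mod_cast hm)
    have hroots (r : ℝ) (hr : r ∈ (elemSymmLine S y (m + 1)).roots) : r < 0 := by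
      by_contra! h
      exact hy r h (by rw [← eval_elemSymmLine]; exact Polynomial.isRoot_of_mem_roots hr)
    have hderiv : Polynomial.derivative (elemSymmLine S y (m + 1)) ≠ 0 := by
      rw [derivative_elemSymmLine_succ]
      exact mul_ne_zero (Polynomial.C_ne_zero.2 hcard.ne') (elemSymmLine_ne_zero (by omega) y)
    have hmem : y ∈ gardingCone S m := ih (by omega) fun t ht => by
      have := eval_derivative_pos (splits_elemSymmLine hm y) hderiv
        (fun r hr => (hroots r hr).trans_le ht) (by rw [eval_elemSymmLine]; exact hpos ht)
      rw [derivative_elemSymmLine_succ, Polynomial.eval_C_mul, eval_elemSymmLine] at this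
      exact (pos_of_mul_pos_right this hcard.le).ne'
    intro j hj
    rcases Nat.le_succ_iff.1 hj with hj | rfl
    · exact hmem j hj
    · simpa using hpos le_rfl

lemma add_smul_one_mem_gardingCone (hm : m ≤ #S) (hy : y ∈ gardingCone S m) {t : ℝ} (ht : 0 ≤ t) :
    y + t • 1 ∈ gardingCone S m := fun j hj =>
  (hy j hj).trans_le
    (elemSymm_le_elemSymm_add (hj.trans hm) (fun i hi => (hy i (hi.trans hj)).le) ht)

lemma smul_mem_gardingCone (hy : y ∈ gardingCone S m) {c : ℝ} (hc : 0 < c) :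
    c • y ∈ gardingCone S m := fun j hj => by
  rw [elemSymm_smul]
  exact mul_pos (pow_pos hc j) (hy j hj)

lemma one_mem_gardingCone (hm : m ≤ #S) : 1 ∈ gardingCone S m :=
  fun _ hj => elemSymm_pos (fun _ _ => one_pos) (hj.trans hm)

lemma starConvex_gardingCone (hm : m ≤ #S) : StarConvex ℝ 1 (gardingCone S m) := by
  intro y hy a b ha hb hab
  rcases hb.eq_or_lt with rfl | hb
  · obtain rfl : a = 1 := by linarith
    simpa using one_mem_gardingCone hm
  · rw [add_comm]
    exact add_smul_one_mem_gardingCone hm (smul_mem_gardingCone hy hb) ha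

lemma isOpen_gardingCone (S : Finset ι) (m : ℕ) : IsOpen (gardingCone S m) := by
  have : gardingCone S m = ⋂ j ∈ Set.Iic m, {y | 0 < elemSymm S y j} := by
    ext y
    simp [gardingCone]
  rw [this]
  exact (Set.finite_Iic m).isOpen_biInter fun j _ =>
    isOpen_lt continuous_const (continuous_elemSymm S j)

lemma elemSymm_nonneg_of_mem_closure_gardingCone (hy : y ∈ closure (gardingCone S m)) {j : ℕ}
    (hj : j ≤ m) : 0 ≤ elemSymm S y j :=
  closure_minimal (fun _ hz => (hz j hj).le)
    (isClosed_le continuous_const (continuous_elemSymm S j)) hy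

lemma mem_gardingCone_of_mem_closure (hm : m ≤ #S) (hy : y ∈ closure (gardingCone S m))
    (hne : elemSymm S y m ≠ 0) : y ∈ gardingCone S m := by
  have hnonneg (j : ℕ) (hj : j ≤ m) := elemSymm_nonneg_of_mem_closure_gardingCone hy hj
  refine mem_gardingCone_of_forall_ne_zero hm fun t ht => ne_of_gt ?_
  exact ((hnonneg m le_rfl).lt_of_ne' hne).trans_le (elemSymm_le_elemSymm_add hm hnonneg ht)

/-- If `e_{j+1}(S \ a)` were nonpositive while `e_j(S \ a) > 0`, then `e_{j+1}(S) > 0` and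
`e_{j+2}(S) > 0` would contradict Newton's inequality for `S \ a`. -/
lemma mem_gardingCone_erase [DecidableEq ι] (hy : y ∈ gardingCone S (m + 1)) {a : ι} (ha : a ∈ S) :
    y ∈ gardingCone (S.erase a) m := by
  intro j
  induction j with
  | zero => simp
  | succ j ih =>
    intro hj
    have hpos := ih (by omega)
    have hj₁ := hy (j + 1) (by omega)
    have hj₂ := hy (j + 2) (by omega)
    rw [elemSymm_erase ha] at hj₁ hj₂
    have hnewton := elemSymm_mul_elemSymm_le_sq (S.erase a) y j
    by_contra! hneg
    nlinarith [mul_pos hpos hj₂, mul_nonneg (neg_nonneg.2 hneg) hj₁.le]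

theorem connectedComponentIn_elemSymm_ne_zero {E : Type*} [AddCommGroup E] [Module ℝ E]
    [TopologicalSpace E] [ContinuousAdd E] [ContinuousSMul ℝ E]
    (hm : m ≤ #S) (Y : E →L[ℝ] ι → ℝ) {e : E} (he : Y e = 1) :
    connectedComponentIn {x | elemSymm S (Y x) m ≠ 0} e = Y ⁻¹' gardingCone S m := by
  have hmem : e ∈ Y ⁻¹' gardingCone S m := by
    rw [Set.mem_preimage, he]
    exact one_mem_gardingCone hm
  have hsub : Y ⁻¹' gardingCone S m ⊆ {x | elemSymm S (Y x) m ≠ 0} := fun x hx => (hx m le_rfl).ne'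
  have hstar : StarConvex ℝ e (Y ⁻¹' gardingCone S m) :=
    StarConvex.linear_preimage Y.toLinearMap
      (by simpa [he] using starConvex_gardingCone hm)
  refine Set.Subset.antisymm ?_ ?_
  · refine isPreconnected_connectedComponentIn.subset_of_closure_inter_subset
      ((isOpen_gardingCone S m).preimage Y.continuous)
      ⟨e, mem_connectedComponentIn (hsub hmem), hmem⟩ ?_
    rintro x ⟨hx, hxF⟩
    exact mem_gardingCone_of_mem_closure hm (Y.continuous.closure_preimage_subset _ hx)
      (connectedComponentIn_subset _ _ hxF)
  · exact (hstar.isPathConnected hmem).isConnected.isPreconnected.subset_connectedComponentIn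
      hmem hsub

end GardingCone

section RatioPencil

/-- The ratio `e_{m+1} / e_m`; its denominator is positive on `gardingCone S (m + 1)`. -/
noncomputable def elemSymmRatio {ι : Type*} (S : Finset ι) (y : ι → ℝ) (m : ℕ) : ℝ :=
  elemSymm S y (m + 1) / elemSymm S y m

lemma elemSymmRatio_pos {ι : Type*} {S : Finset ι} {y : ι → ℝ} {m : ℕ}
    (hy : y ∈ gardingCone S (m + 1)) : 0 < elemSymmRatio S y m :=
  div_pos (hy (m + 1) le_rfl) (hy m m.le_succ)

section Recursion

variable {ι : Type*} [DecidableEq ι] {S : Finset ι} {y : ι → ℝ} {m : ℕ}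

lemma add_elemSymmRatio_erase (hy : y ∈ gardingCone S (m + 2)) {i : ι} (hi : i ∈ S) :
    y i + elemSymmRatio (S.erase i) y m = elemSymm S y (m + 1) / elemSymm (S.erase i) y m := by
  have := mem_gardingCone_erase hy hi m m.le_succ
  rw [elemSymmRatio, elemSymm_erase hi]
  field_simp
  ring

lemma add_elemSymmRatio_erase_pos (hy : y ∈ gardingCone S (m + 2)) {i : ι} (hi : i ∈ S) :
    0 < y i + elemSymmRatio (S.erase i) y m := by
  rw [add_elemSymmRatio_erase hy hi]
  exact div_pos (hy (m + 1) (by omega)) (mem_gardingCone_erase hy hi m m.le_succ)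

/-- Up to a constant, `e_{m+2} / e_{m+1}` is the sum over `i` of the parallel sums
`y_i r_i / (y_i + r_i)`, where `r_i` is the previous ratio with the variable `i` deleted. -/
theorem elemSymmRatio_succ (hy : y ∈ gardingCone S (m + 2)) :
    elemSymmRatio S y (m + 1) = (m + 2 : ℝ)⁻¹ * ∑ i : S,
      y i * elemSymmRatio (S.erase i) y m / (y i + elemSymmRatio (S.erase i) y m) := by
  have hterm (i : S) :
      y i * elemSymmRatio (S.erase i) y m / (y i + elemSymmRatio (S.erase i) y m) =
        y i * elemSymm (S.erase i) y (m + 1) / elemSymm S y (m + 1) := by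
    have := mem_gardingCone_erase hy i.2 m m.le_succ
    have := hy (m + 1) (by omega)
    rw [add_elemSymmRatio_erase hy i.2, elemSymmRatio]
    field_simp
  rw [sum_congr rfl fun i _ => hterm i, ← sum_div,
    sum_coe_sort S fun i => y i * elemSymm (S.erase i) y (m + 1), sum_mul_elemSymm_erase,
    elemSymmRatio]
  push_cast
  field_simp
  ring

end Recursion

/-- The parallel sum `y r / (y + r)` is the minimum over `w` of `y (1 - w)² + r w²`. -/
lemma parallel_sum_mul_sq_le {y r : ℝ} (h : 0 < y + r) (u w : ℝ) :
    y * r / (y + r) * u ^ 2 ≤ y * (u - w) ^ 2 + r * w ^ 2 := by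
  rw [div_mul_eq_mul_div, div_le_iff₀ h]
  nlinarith [sq_nonneg ((y + r) * w - y * u)]

lemma parallel_sum_eq {y r : ℝ} (h : 0 < y + r) :
    y * (1 - y / (y + r)) ^ 2 + r * (y / (y + r)) ^ 2 = y * r / (y + r) := by
  field_simp
  ring

/-- The pullback `Q ↦ Q ∘ f` of quadratic forms, bundled as a linear map so that composing with it
pulls back linear pencils. -/
def quadraticFormPullback {V W : Type*} [AddCommGroup V] [Module ℝ V] [AddCommGroup W] [Module ℝ W]
    (f : V →ₗ[ℝ] W) : QuadraticForm ℝ W →ₗ[ℝ] QuadraticForm ℝ V where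
  toFun Q := Q.comp f
  map_add' _ _ := rfl
  map_smul' _ _ := rfl

@[simp]
lemma quadraticFormPullback_apply {V W : Type*} [AddCommGroup V] [Module ℝ V] [AddCommGroup W]
    [Module ℝ W] (f : V →ₗ[ℝ] W) (Q : QuadraticForm ℝ W) (v : V) :
    quadraticFormPullback f Q v = Q (f v) := rfl

/-- A linear pencil `y ↦ Q y` of quadratic forms on `V`, positive definite at `y = 1`, such that on
`gardingCone S (m + 1)` the minimum of `Q y` over the hyperplane `u = 1` is `e_{m+1} / e_m`. -/
structure IsRatioPencil {ι V : Type*} [AddCommGroup V] [Module ℝ V] (S : Finset ι) (m : ℕ)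
    (u : V →ₗ[ℝ] ℝ) (Q : (ι → ℝ) →ₗ[ℝ] QuadraticForm ℝ V) : Prop where
  posDef : (Q 1).PosDef
  le : ∀ y ∈ gardingCone S (m + 1), ∀ v, elemSymmRatio S y m * u v ^ 2 ≤ Q y v
  exists_eq : ∀ y ∈ gardingCone S (m + 1), ∃ v, u v = 1 ∧ Q y v = elemSymmRatio S y m

/-- The pencil whose form at `y` takes `(s, v)` to
`(m + 2)⁻¹ * ∑ i, (y i * (s - u i (v i)) ^ 2 + Q i y (v i))`; it represents sums of parallel sums
of the ratios represented by the `Q i`. -/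
noncomputable def ratioPencilStep {ι : Type*} (S : Finset ι) (m : ℕ) {V : S → Type*}
    [∀ i, AddCommGroup (V i)] [∀ i, Module ℝ (V i)] (u : ∀ i, V i →ₗ[ℝ] ℝ)
    (Q : ∀ i, (ι → ℝ) →ₗ[ℝ] QuadraticForm ℝ (V i)) :
    (ι → ℝ) →ₗ[ℝ] QuadraticForm ℝ (ℝ × ∀ i, V i) :=
  (m + 2 : ℝ)⁻¹ • ∑ i : S,
    ((LinearMap.proj (i : ι)).smulRight (QuadraticMap.sq.comp
        (LinearMap.fst ℝ ℝ (∀ i, V i) - u i ∘ₗ LinearMap.proj i ∘ₗ LinearMap.snd ℝ ℝ _)) +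
      quadraticFormPullback (LinearMap.proj i ∘ₗ LinearMap.snd ℝ ℝ _) ∘ₗ Q i)

section Pencil

variable {ι : Type*} {S : Finset ι} {m : ℕ}

section Step

variable {V : S → Type*} [∀ i, AddCommGroup (V i)] [∀ i, Module ℝ (V i)] {u : ∀ i, V i →ₗ[ℝ] ℝ}
  {Q : ∀ i, (ι → ℝ) →ₗ[ℝ] QuadraticForm ℝ (V i)}

lemma ratioPencilStep_apply (y : ι → ℝ) (v : ℝ × ∀ i, V i) :
    ratioPencilStep S m u Q y v =
      (m + 2 : ℝ)⁻¹ * ∑ i : S, (y i * (v.1 - u i (v.2 i)) ^ 2 + Q i y (v.2 i)) := by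
  simp [ratioPencilStep, LinearMap.sum_apply, sq]

lemma posDef_ratioPencilStep (hS : S.Nonempty) (hQ : ∀ i, (Q i 1).PosDef) :
    (ratioPencilStep S m u Q 1).PosDef := by
  intro v hv
  have : Nonempty S := hS.to_subtype
  have hnonneg (i : S) : 0 ≤ (v.1 - u i (v.2 i)) ^ 2 + Q i 1 (v.2 i) :=
    add_nonneg (sq_nonneg _) ((hQ i).nonneg _)
  simp only [ratioPencilStep_apply, Pi.one_apply, one_mul]
  refine mul_pos (by positivity) (sum_pos' (fun i _ => hnonneg i) ?_)
  by_contra! hle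
  have hzero (i : S) : v.2 i = 0 := by
    by_contra hi
    linarith [hle i (mem_univ i), sq_nonneg (v.1 - u i (v.2 i)), hQ i _ hi]
  obtain ⟨i⟩ := this
  have hfst : v.1 ^ 2 ≤ 0 := by simpa [hzero i] using hle i (mem_univ i)
  exact hv (Prod.ext (by simpa using hfst.antisymm (sq_nonneg _)) (funext hzero))

theorem isRatioPencil_ratioPencilStep [DecidableEq ι] (hS : S.Nonempty)
    (hQ : ∀ i : S, IsRatioPencil (S.erase i) m (u i) (Q i)) :
    IsRatioPencil S (m + 1) (LinearMap.fst ℝ ℝ _) (ratioPencilStep S m u Q) where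
  posDef := posDef_ratioPencilStep hS fun i => (hQ i).posDef
  le y hy v := by
    rw [elemSymmRatio_succ hy, ratioPencilStep_apply, mul_assoc, sum_mul]
    gcongr with i
    exact (parallel_sum_mul_sq_le (add_elemSymmRatio_erase_pos hy i.2) _ _).trans
      (add_le_add_right ((hQ i).le y (mem_gardingCone_erase hy i.2) _) _)
  exists_eq y hy := by
    choose w huw hw using fun i : S => (hQ i).exists_eq y (mem_gardingCone_erase hy i.2)
    refine ⟨(1, fun i => (y i / (y i + elemSymmRatio (S.erase i) y m)) • w i), rfl, ?_⟩
    rw [elemSymmRatio_succ hy, ratioPencilStep_apply]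
    congr 1
    refine sum_congr rfl fun i _ => ?_
    rw [← parallel_sum_eq (add_elemSymmRatio_erase_pos hy i.2)]
    simp only [map_smul, QuadraticMap.map_smul, huw, hw, smul_eq_mul]
    ring

end Step

lemma isRatioPencil_zero (hS : S.Nonempty) :
    IsRatioPencil S 0 LinearMap.id
      ((∑ i ∈ S, LinearMap.proj i : (ι → ℝ) →ₗ[ℝ] ℝ).smulRight (QuadraticMap.sq (R := ℝ))) where
  posDef v hv := by simp [hS.card_pos, hv]
  le y _ v := by simp [elemSymmRatio, elemSymm_one, sq]
  exists_eq y _ := ⟨1, rfl, by simp [elemSymmRatio, elemSymm_one]⟩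

section Transport

variable {V W : Type*} [AddCommGroup V] [Module ℝ V] [AddCommGroup W] [Module ℝ W]
  {u : V →ₗ[ℝ] ℝ} {Q : (ι → ℝ) →ₗ[ℝ] QuadraticForm ℝ V}

lemma IsRatioPencil.pullback (hQ : IsRatioPencil S m u Q) (f : W ≃ₗ[ℝ] V) :
    IsRatioPencil S m (u ∘ₗ f.toLinearMap) (quadraticFormPullback f.toLinearMap ∘ₗ Q) where
  posDef w hw := hQ.posDef (f w) (f.map_ne_zero_iff.2 hw)
  le y hy w := hQ.le y hy (f w)
  exists_eq y hy := by
    obtain ⟨v, hv⟩ := hQ.exists_eq y hy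
    obtain ⟨w, rfl⟩ := f.surjective v
    exact ⟨w, hv⟩

lemma IsRatioPencil.exists_fin [FiniteDimensional ℝ V] (hQ : IsRatioPencil S m u Q) :
    ∃ (N : ℕ) (u : (Fin N → ℝ) →ₗ[ℝ] ℝ) (Q : (ι → ℝ) →ₗ[ℝ] QuadraticForm ℝ (Fin N → ℝ)),
      IsRatioPencil S m u Q :=
  ⟨_, _, _, hQ.pullback (Module.finBasis ℝ V).equivFun.symm⟩

end Transport

theorem exists_isRatioPencil (hm : m + 1 ≤ #S) :
    ∃ (N : ℕ) (u : (Fin N → ℝ) →ₗ[ℝ] ℝ) (Q : (ι → ℝ) →ₗ[ℝ] QuadraticForm ℝ (Fin N → ℝ)),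
      IsRatioPencil S m u Q := by
  classical
  induction m generalizing S with
  | zero => exact (isRatioPencil_zero (card_pos.1 hm)).exists_fin
  | succ m ih =>
    choose N u Q hQ using fun i : S => ih (S := S.erase i) (by rw [card_erase_of_mem i.2]; omega)
    exact (isRatioPencil_ratioPencilStep (card_pos.1 (by omega)) hQ).exists_fin

section RootBound

variable {y : ι → ℝ}

lemma add_smul_one_mem_gardingCone_of_forall_root_lt (hm : m ≤ #S) {s : ℝ}
    (hroots : ∀ r ∈ (elemSymmLine S y m).roots, r < s) : y + s • 1 ∈ gardingCone S m := by
  refine mem_gardingCone_of_forall_ne_zero hm fun t ht hzero => ?_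
  rw [add_assoc, ← add_smul, ← eval_elemSymmLine] at hzero
  linarith [hroots _ ((Polynomial.mem_roots (elemSymmLine_ne_zero hm y)).2 hzero)]

lemma elemSymmRatio_add_smul_one_le (hm : m + 1 ≤ #S) {r s : ℝ}
    (hr : r ∈ (elemSymmLine S y (m + 1)).roots)
    (hroots : ∀ r' ∈ (elemSymmLine S y (m + 1)).roots, r' < s) :
    elemSymmRatio S (y + s • 1) m ≤ (s - r) * (#S - m) := by
  have hmem := add_smul_one_mem_gardingCone_of_forall_root_lt hm hroots
  have hbound := eval_le_sub_mul_eval_derivative (splits_elemSymmLine hm y) hr hroots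
    (by simpa [eval_elemSymmLine] using hmem (m + 1) le_rfl)
  rw [derivative_elemSymmLine_succ, Polynomial.eval_C_mul, eval_elemSymmLine, eval_elemSymmLine,
    ← mul_assoc] at hbound
  exact (div_le_iff₀ (hmem m m.le_succ)).2 hbound

end RootBound

section Nonneg

variable {V : Type*} [AddCommGroup V] [Module ℝ V] {u : V →ₗ[ℝ] ℝ}
  {Q : (ι → ℝ) →ₗ[ℝ] QuadraticForm ℝ V} {y : ι → ℝ}

lemma IsRatioPencil.nonneg (hQ : IsRatioPencil S m u Q) (hy : y ∈ gardingCone S (m + 1)) (v : V) :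
    0 ≤ Q y v :=
  (mul_nonneg (elemSymmRatio_pos hy).le (sq_nonneg _)).trans (hQ.le y hy v)

lemma IsRatioPencil.mul_elemSymmRatio_one_le (hQ : IsRatioPencil S m u Q) (hm : m + 1 ≤ #S)
    (hy : ∀ v, 0 ≤ Q y v) {s : ℝ} (hs : 0 ≤ s) (hys : y + s • 1 ∈ gardingCone S (m + 1)) :
    s * elemSymmRatio S 1 m ≤ elemSymmRatio S (y + s • 1) m := by
  obtain ⟨v, huv, hv⟩ := hQ.exists_eq _ hys
  have hone : elemSymmRatio S 1 m ≤ Q 1 v := by simpa [huv] using hQ.le 1 (one_mem_gardingCone hm) v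
  calc s * elemSymmRatio S 1 m ≤ s * Q 1 v := by gcongr
    _ ≤ Q y v + s * Q 1 v := le_add_of_nonneg_left (hy v)
    _ = elemSymmRatio S (y + s • 1) m := by simp [← hv]

/-- At a positive largest root the ratio would vanish, while `Q y ≥ 0` keeps it bounded below. -/
lemma IsRatioPencil.root_nonpos (hQ : IsRatioPencil S m u Q) (hm : m + 1 ≤ #S)
    (hy : ∀ v, 0 ≤ Q y v) {r : ℝ} (hr : r ∈ (elemSymmLine S y (m + 1)).roots) : r ≤ 0 := by
  obtain ⟨t, ht, hmax⟩ := (elemSymmLine S y (m + 1)).roots.toFinset.exists_max_image id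
    ⟨r, Multiset.mem_toFinset.2 hr⟩
  simp only [Multiset.mem_toFinset, id] at ht hmax
  by_contra! hrpos
  have htpos : 0 < t := hrpos.trans_le (hmax r hr)
  have hone := elemSymmRatio_pos (one_mem_gardingCone hm)
  have hcard : (0 : ℝ) < #S - m := sub_pos.2 (by exact_mod_cast hm)
  have hbound (s : ℝ) (hs : t < s) : t * elemSymmRatio S 1 m ≤ (s - t) * (#S - m) := by
    have hroots (r' : ℝ) (hr' : r' ∈ (elemSymmLine S y (m + 1)).roots) : r' < s :=
      (hmax r' hr').trans_lt hs
    calc t * elemSymmRatio S 1 m ≤ s * elemSymmRatio S 1 m := by gcongr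
      _ ≤ elemSymmRatio S (y + s • 1) m := hQ.mul_elemSymmRatio_one_le hm hy (htpos.trans hs).le
        (add_smul_one_mem_gardingCone_of_forall_root_lt hm hroots)
      _ ≤ (s - t) * (#S - m) := elemSymmRatio_add_smul_one_le hm ht hroots
  refine (mul_pos htpos hone).not_ge (le_of_forall_pos_le_add fun ε hε => ?_)
  simpa [hcard.ne'] using hbound (t + ε / (#S - m)) (by simp [hε, hcard])

theorem IsRatioPencil.closure_preimage_gardingCone [Finite ι] (hQ : IsRatioPencil S m u Q)
    (hm : m + 1 ≤ #S) {E : Type*} [AddCommGroup E] [Module ℝ E] [TopologicalSpace E]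
    [ContinuousAdd E] [ContinuousSMul ℝ E] (Y : E →L[ℝ] ι → ℝ) {e : E} (he : Y e = 1) :
    closure (Y ⁻¹' gardingCone S (m + 1)) = {x | ∀ v, 0 ≤ Q (Y x) v} := by
  refine Set.Subset.antisymm (closure_minimal (fun x hx => hQ.nonneg hx) ?_) fun x hx => ?_
  · have hcont (v : V) : Continuous fun y => Q y v :=
      LinearMap.continuous_on_pi { toFun y := Q y v, map_add' := by simp, map_smul' := by simp }
    rw [Set.ofPred_forall]
    exact isClosed_iInter fun v => isClosed_le continuous_const ((hcont v).comp Y.continuous)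
  · have htendsto :
        Filter.Tendsto (fun t : ℝ => x + t • e) (nhdsWithin 0 (Set.Ioi 0)) (nhds x) := by
      refine (Continuous.tendsto' ?_ 0 x (by simp)).mono_left nhdsWithin_le_nhds
      fun_prop
    refine mem_closure_of_tendsto htendsto ?_
    filter_upwards [self_mem_nhdsWithin] with t ht
    rw [Set.mem_preimage, map_add, map_smul, he]
    exact add_smul_one_mem_gardingCone_of_forall_root_lt hm fun r hr =>
      (hQ.root_nonpos hm hx hr).trans_lt ht

end Nonneg

end Pencil

end RatioPencil

section Spectrahedral

/-- Spectrahedral cones: those cut out by a homogeneous linear matrix inequality with some positive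
definite combination. -/
def IsSpectrahedral {n : ℕ} (K : Set (Fin n → ℝ)) : Prop :=
  ∃ (N : ℕ) (A : Fin n → Matrix (Fin N) (Fin N) ℝ) (y : Fin n → ℝ),
    (∀ i, (A i).IsSymm) ∧ (∑ i, y i • A i).PosDef ∧ K = {x | (∑ i, x i • A i).PosSemidef}

variable {n : Type*} [Fintype n] [DecidableEq n]

lemma dotProduct_toMatrix'_mulVec {R : Type*} [CommRing R] [Invertible (2 : R)]
    (Q : QuadraticForm R (n → R)) (v : n → R) : v ⬝ᵥ Q.toMatrix'.mulVec v = Q v := by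
  rw [QuadraticForm.toMatrix', ← Matrix.toLinearMap₂'_apply', Matrix.toLinearMap₂'_toMatrix',
    QuadraticMap.associated_eq_self_apply]

lemma posDef_toMatrix'_iff (Q : QuadraticForm ℝ (n → ℝ)) : Q.toMatrix'.PosDef ↔ Q.PosDef := by
  simp only [Matrix.posDef_iff_dotProduct_mulVec, star_trivial, dotProduct_toMatrix'_mulVec,
    Matrix.isHermitian_iff_isSymm, Q.isSymm_toMatrix', true_and, QuadraticMap.PosDef]

lemma posSemidef_toMatrix'_iff (Q : QuadraticForm ℝ (n → ℝ)) :
    Q.toMatrix'.PosSemidef ↔ ∀ v, 0 ≤ Q v := by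
  simp only [Matrix.posSemidef_iff_dotProduct_mulVec, star_trivial, dotProduct_toMatrix'_mulVec,
    Matrix.isHermitian_iff_isSymm, Q.isSymm_toMatrix', true_and]

lemma sum_smul_toMatrix'_single {σ : Type*} [Fintype σ] [DecidableEq σ]
    (P : (σ → ℝ) →ₗ[ℝ] QuadraticForm ℝ (n → ℝ)) (x : σ → ℝ) :
    ∑ i, x i • (P (Pi.single i 1)).toMatrix' = (P x).toMatrix' := by
  simp only [QuadraticForm.toMatrix', ← map_smul, ← map_sum]
  rw [← pi_eq_sum_univ']

theorem isSpectrahedral_setOf_forall_nonneg {n N : ℕ}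
    (P : (Fin n → ℝ) →ₗ[ℝ] QuadraticForm ℝ (Fin N → ℝ)) {y : Fin n → ℝ} (hy : (P y).PosDef) :
    IsSpectrahedral {x | ∀ v, 0 ≤ P x v} := by
  refine ⟨N, fun i => (P (Pi.single i 1)).toMatrix', y, fun i => (P _).isSymm_toMatrix', ?_, ?_⟩
  · rwa [sum_smul_toMatrix'_single, posDef_toMatrix'_iff]
  · simp only [sum_smul_toMatrix'_single, posSemidef_toMatrix'_iff]

end Spectrahedral

section LinearForms

/-- The linear form `x ↦ a ⬝ᵥ x`, as a polynomial. -/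
noncomputable def linearForm {n : ℕ} (a : Fin n → ℝ) : MvPolynomial (Fin n) ℝ :=
  ∑ i, C (a i) * X i

variable {n : ℕ}

lemma eval_linearForm (a x : Fin n → ℝ) : eval x (linearForm a) = a ⬝ᵥ x := by
  simp [linearForm, dotProduct]

lemma linearForm_smul (c : ℝ) (a : Fin n → ℝ) : linearForm (c • a) = c • linearForm a := by
  simp [linearForm, Finset.smul_sum, smul_eq_C_mul, mul_assoc]

lemma sum_derivation_apply {R A M ι : Type*} [CommSemiring R] [CommSemiring A] [Algebra R A]
    [AddCommMonoid M] [Module A M] [Module R M] (s : Finset ι) (D : ι → Derivation R A M) (a : A) :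
    (∑ i ∈ s, D i) a = ∑ i ∈ s, D i a := by
  rw [← Derivation.coeFnAddMonoidHom_apply, map_sum, Finset.sum_apply]
  rfl

lemma dirDeriv_eq_mkDerivation (e : Fin n → ℝ) :
    dirDeriv e = ⇑(mkDerivation ℝ fun i => (C (e i) : MvPolynomial (Fin n) ℝ)) := by
  have hsum : ∑ i, (C (e i) : MvPolynomial (Fin n) ℝ) • pderiv i =
      mkDerivation ℝ fun i => (C (e i) : MvPolynomial (Fin n) ℝ) :=
    derivation_ext fun j => by
      simp [sum_derivation_apply, mkDerivation_X, pderiv_X, Pi.single_apply]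
  ext1 h
  simp [dirDeriv, ← hsum, sum_derivation_apply]

lemma dirDeriv_linearForm (e a : Fin n → ℝ) : dirDeriv e (linearForm a) = C (a ⬝ᵥ e) := by
  simp [dirDeriv_eq_mkDerivation, linearForm, dotProduct, mkDerivation_X]

variable {ι : Type*}

/-- The linear map `x ↦ (ℓ_j(x) / ℓ_j(e))_j`, which sends `e` to the all-ones vector when no
`ℓ_j(e)` vanishes. -/
noncomputable def normalizedForms (ℓ : ι → Fin n → ℝ) (e : Fin n → ℝ) :
    (Fin n → ℝ) →L[ℝ] ι → ℝ :=
  LinearMap.toContinuousLinearMap (Matrix.mulVecLin (.of fun j => (ℓ j ⬝ᵥ e)⁻¹ • ℓ j))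

lemma normalizedForms_apply (ℓ : ι → Fin n → ℝ) (e x : Fin n → ℝ) (j : ι) :
    normalizedForms ℓ e x j = ((ℓ j ⬝ᵥ e)⁻¹ • ℓ j) ⬝ᵥ x := rfl

lemma normalizedForms_self {ℓ : ι → Fin n → ℝ} {e : Fin n → ℝ} (he : ∀ j, ℓ j ⬝ᵥ e ≠ 0) :
    normalizedForms ℓ e e = 1 := by
  ext j
  simp [normalizedForms_apply, smul_dotProduct, he j]

theorem eval_iterate_dirDeriv_prod_linearForm [Fintype ι] {ℓ : ι → Fin n → ℝ} {e : Fin n → ℝ}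
    (he : ∀ j, ℓ j ⬝ᵥ e ≠ 0) {k m : ℕ} (hkm : k + m = Fintype.card ι) (x : Fin n → ℝ) :
    eval x ((dirDeriv e)^[k] (∏ j, linearForm (ℓ j))) =
      (∏ j, ℓ j ⬝ᵥ e) * (k ! * elemSymm univ (normalizedForms ℓ e x) m) := by
  have hprod : ∏ j, linearForm (ℓ j) =
      (∏ j, ℓ j ⬝ᵥ e) • ∏ j, linearForm ((ℓ j ⬝ᵥ e)⁻¹ • ℓ j) := by
    simp only [linearForm_smul, prod_smul, prod_inv_distrib]
    rw [smul_inv_smul₀ (prod_ne_zero_iff.2 fun j _ => he j)]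
  have hone (j : ι) : dirDeriv e (linearForm ((ℓ j ⬝ᵥ e)⁻¹ • ℓ j)) = 1 := by
    rw [dirDeriv_linearForm, smul_dotProduct, smul_eq_mul, inv_mul_cancel₀ (he j), C_1]
  rw [dirDeriv_eq_mkDerivation] at hone ⊢
  rw [hprod, ← Derivation.coeFn_coe, ← Module.End.pow_apply, map_smul, Module.End.pow_apply,
    Derivation.coeFn_coe, iterate_derivation_prod _ (fun j _ => hone j) hkm, smul_eval, map_mul,
    map_natCast, map_elemSymm]
  simp only [eval_linearForm]
  rfl

end LinearForms

/-- Derivative cones of polyhedral cones are spectrahedral: if `h = ℓ_1 ⋯ ℓ_d` is a product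
of linear forms with `h(e) ≠ 0`, then for `1 ≤ k ≤ d-1` the cone `Λ₊(D_e^k h, e)` is
spectrahedral. -/
theorem derivative_cone_spectrahedral {n d : ℕ} (ℓ : Fin d → (Fin n → ℝ)) (e : Fin n → ℝ)
    (he : eval e (∏ j, (∑ i, C (ℓ j i) * X i)) ≠ 0)
    (k : ℕ) (hk : 1 ≤ k) (hkd : k ≤ d - 1) :
    ∃ (N : ℕ) (A : Fin n → Matrix (Fin N) (Fin N) ℝ) (y : Fin n → ℝ),
      (∀ i, (A i).IsSymm) ∧ (∑ i, y i • A i).PosDef ∧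
      hypCone ((fun p => dirDeriv e p)^[k] (∏ j, (∑ i, C (ℓ j i) * X i))) e =
        {x : Fin n → ℝ | (∑ i, x i • A i).PosSemidef} := by
  change IsSpectrahedral (hypCone ((dirDeriv e)^[k] (∏ j, linearForm (ℓ j))) e)
  change eval e (∏ j, linearForm (ℓ j)) ≠ 0 at he
  rw [eval_prod, prod_ne_zero_iff] at he
  have hℓ (j : Fin d) : ℓ j ⬝ᵥ e ≠ 0 := by simpa [eval_linearForm] using he j (mem_univ j)
  obtain ⟨m, rfl⟩ : ∃ m, d = k + (m + 1) := ⟨d - k - 1, by omega⟩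
  have hm : m + 1 ≤ #(univ : Finset (Fin (k + (m + 1)))) := by simp
  obtain ⟨N, u, Q, hQ⟩ := exists_isRatioPencil hm
  set Y := normalizedForms ℓ e
  have hYe : Y e = 1 := normalizedForms_self hℓ
  have hne : {x | eval x ((dirDeriv e)^[k] (∏ j, linearForm (ℓ j))) ≠ 0} =
      {x | elemSymm univ (Y x) (m + 1) ≠ 0} := by
    ext x
    simp [eval_iterate_dirDeriv_prod_linearForm hℓ (Fintype.card_fin _).symm, prod_ne_zero_iff, hℓ,
      Nat.factorial_ne_zero, Y]
  have hcone : hypCone ((dirDeriv e)^[k] (∏ j, linearForm (ℓ j))) e =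
      {x | ∀ v, 0 ≤ Q (Y x) v} := by
    rw [hypCone, hne, connectedComponentIn_elemSymm_ne_zero hm Y hYe,
      hQ.closure_preimage_gardingCone hm Y hYe]
  rw [hcone]
  exact isSpectrahedral_setOf_forall_nonneg (Q ∘ₗ Y.toLinearMap) (y := e)
    (by simpa [hYe] using hQ.posDef)
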